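/- Let k ≥ 2 and let ω = ω(n) be any function tending to infinity as n → ∞. Define the random variable p_T := sup{p ∈ [0,1] : G_p is not topologically connected}, where G_p is topologically connected means H^0(G_p;F_2) ≅ F_2. Then with high probability (log n − ω)·k!/n^k < p_T < (log n + ω)·k!/n^k; in particular, with high probability p_T > log n / n^k. -/

import Mathlib

open MeasureTheory Filter

attribute [local instance] Classical.propDecidable

namespace RSC

variable {V : Type*}

/-- `A` is an `i`-dimensional simplex of the complex `G`. -/
def IsSimplex (G : Set (Finset V)) (i : ℕ) (A : Finset V) : Prop :=
  A ∈ G ∧ A.card = i + 1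

/-- A `k`-dimensional simplicial complex on vertex set `V`. -/
structure IsKComplex (G : Set (Finset V)) (k : ℕ) : Prop where
  down : ∀ A ∈ G, ∀ B, B ⊆ A → B.Nonempty → B ∈ G
  singletons : ∀ v : V, ({v} : Finset V) ∈ G
  dim : ∀ A ∈ G, A.card ≤ k + 1

/-- `i`-cochains with `F₂`-coefficients. -/
abbrev Cochain (G : Set (Finset V)) (i : ℕ) : Type _ :=
  {A : Finset V // IsSimplex G i A} → ZMod 2

/-- The coboundary map `δ^i : C^i(G) → C^{i+1}(G)`. -/
noncomputable def coboundary (G : Set (Finset V)) (i : ℕ) :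
    Cochain G i →ₗ[ZMod 2] Cochain G (i + 1) where
  toFun f := fun σ => ∑ τ ∈ Finset.powersetCard (i + 1) (σ : Finset V),
      if h : IsSimplex G i τ then f ⟨τ, h⟩ else 0
  map_add' f g := by
    funext σ
    simp only [Pi.add_apply, ← Finset.sum_add_distrib]
    refine Finset.sum_congr rfl fun τ _ => ?_
    by_cases h : IsSimplex G i τ <;> simp [h]
  map_smul' c f := by
    funext σ
    simp only [Pi.smul_apply, RingHom.id_apply, Finset.smul_sum]
    refine Finset.sum_congr rfl fun τ _ => ?_
    by_cases h : IsSimplex G i τ <;> simp [h]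

/-- The submodule of `i`-cocycles. -/
noncomputable def cocycles (G : Set (Finset V)) (i : ℕ) : Submodule (ZMod 2) (Cochain G i) :=
  LinearMap.ker (coboundary G i)

/-- The submodule of `i`-coboundaries (`δ^{-1}` is the zero map). -/
noncomputable def coboundaries (G : Set (Finset V)) : (i : ℕ) → Submodule (ZMod 2) (Cochain G i)
  | 0 => ⊥
  | (i + 1) => LinearMap.range (coboundary G i)

/-- The `i`-th cohomology group `H^i(G;F₂) = ker δ^i / im δ^{i-1}`. -/
noncomputable abbrev cohomology (G : Set (Finset V)) (i : ℕ) :=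
  (cocycles G i) ⧸ ((coboundaries G i).comap (cocycles G i).subtype)

/-- `F₂`-cohomological `j`-connectedness: `H^0 ≅ F₂` and `H^i = 0` for `1 ≤ i ≤ j`. -/
def CohomConnected (G : Set (Finset V)) (j : ℕ) : Prop :=
  Nonempty (cohomology G 0 ≃ₗ[ZMod 2] ZMod 2) ∧
    ∀ i, 1 ≤ i → i ≤ j → Subsingleton (cohomology G i)

/-- The `j`-flower in `K` with centre `C`: the set of petals `C ∪ {w}`, `w ∈ K \ C`. -/
def Flower [DecidableEq V] (K C : Finset V) : Set (Finset V) :=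
  {P | ∃ w ∈ K \ C, P = insert w C}

/-- A copy of `M_j^-`: a `k`-simplex `K` together with a `(j-1)`-simplex `C ⊆ K` such that
each petal of the flower `F(K,C)` is contained in no `k`-simplex other than `K`. -/
def IsMjMinus [DecidableEq V] (G : Set (Finset V)) (k j : ℕ) (K C : Finset V) : Prop :=
  IsSimplex G k K ∧ C ∈ G ∧ C.card = j ∧ C ⊆ K ∧
    ∀ P ∈ Flower K C, ∀ K', IsSimplex G k K' → P ⊆ K' → K' = K

/-- A `j`-cycle: every `(j-1)`-simplex lies in an even number of members of `J`. -/
def IsCycle (G : Set (Finset V)) (j : ℕ) (J : Finset (Finset V)) : Prop :=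
  (∀ σ ∈ J, IsSimplex G j σ) ∧
    ∀ τ : Finset V, τ.card = j → Even (J.filter (fun σ => τ ⊆ σ)).card

/-- A copy of `M_j`. -/
def IsMj [DecidableEq V] (G : Set (Finset V)) (k j : ℕ) (K C : Finset V)
    (J : Finset (Finset V)) : Prop :=
  IsMjMinus G k j K C ∧ IsCycle G j J ∧ ∃! P : Finset V, P ∈ J ∧ P ∈ Flower K C

/-- A `j`-shell: a `(j+2)`-set all of whose `(j+1)`-subsets are `j`-simplices. -/
def IsShell (G : Set (Finset V)) (j : ℕ) (A : Finset V) : Prop :=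
  A.card = j + 2 ∧ ∀ τ ⊆ A, τ.card = j + 1 → τ ∈ G

/-- A copy of `M_j^*`. -/
def IsMjStar [DecidableEq V] (G : Set (Finset V)) (k j : ℕ) (K C : Finset V) (w a : V) : Prop :=
  IsMjMinus G k j K C ∧ w ∈ K \ C ∧ a ∉ K ∧ IsShell G j (insert a (insert w C))

/-- The support of a cochain. -/
def cochainSupport {G : Set (Finset V)} {i : ℕ} (f : Cochain G i) : Set (Finset V) :=
  {A | ∃ h : IsSimplex G i A, f ⟨A, h⟩ = 1}

/-- A cochain arising from a copy of `M_j^-`: its support is the flower `F(K,C)`. -/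
def ArisesFrom [DecidableEq V] (G : Set (Finset V)) (k j : ℕ) (f : Cochain G j)
    (K C : Finset V) : Prop :=
  IsMjMinus G k j K C ∧ cochainSupport f = Flower K C

/-- A `j`-cocycle generated by copies of `M_j^-`: it differs by a `j`-coboundary from a sum
of `j`-cocycles arising from copies of `M_j^-`. -/
def GeneratedByMjMinus [DecidableEq V] (G : Set (Finset V)) (k j : ℕ) (f : Cochain G j) : Prop :=
  ∃ (m : ℕ) (fs : Fin m → Cochain G j),
    (∀ i, ∃ K C, ArisesFrom G k j (fs i) K C) ∧
      f - (∑ i, fs i) ∈ coboundaries G j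

/-- Membership in `N_G`: a `j`-cocycle not generated by copies of `M_j^-`. -/
def InNG [DecidableEq V] (G : Set (Finset V)) (k j : ℕ) (f : Cochain G j) : Prop :=
  f ∈ cocycles G j ∧ ¬ GeneratedByMjMinus G k j f

/-- Traversability: the transitive closure of "lying in a common `k`-simplex" is `S × S`. -/
def Traversable (G : Set (Finset V)) (k : ℕ) (S : Set (Finset V)) : Prop :=
  ∀ σ₁ ∈ S, ∀ σ₂ ∈ S,
    Relation.TransGen
      (fun a b => a ∈ S ∧ b ∈ S ∧ ∃ K, IsSimplex G k K ∧ a ⊆ K ∧ b ⊆ K) σ₁ σ₂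

/-- A local obstacle: a `k`-simplex containing at least `k-j+1` many `j`-simplices,
each lying in no other `k`-simplex. -/
def IsLocalObstacle (G : Set (Finset V)) (k j : ℕ) (K : Finset V) : Prop :=
  IsSimplex G k K ∧
    k - j + 1 ≤ {σ : Finset V | IsSimplex G j σ ∧ σ ⊆ K ∧
      ∀ K', IsSimplex G k K' → σ ⊆ K' → K' = K}.ncard

/-- The random complex `G_p` given birth times `t`: all singletons together with all
non-empty subsets of `(k+1)`-sets with birth time at most `p`. -/
def complexAt (k n : ℕ) (t : Finset (Fin n) → ℝ) (p : ℝ) : Set (Finset (Fin n)) :=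
  {A | (∃ v, A = {v}) ∨
    (A.Nonempty ∧ ∃ K : Finset (Fin n), K.card = k + 1 ∧ t K ≤ p ∧ A ⊆ K)}

/-- The distribution of birth times: i.i.d. uniform on `[0,1]`. -/
noncomputable def birthMeasure (n : ℕ) : Measure (Finset (Fin n) → ℝ) :=
  Measure.pi fun _ => volume.restrict (Set.Icc (0 : ℝ) 1)

/-- `p_{M_j}`: the supremum of the probabilities `p ∈ [0,1]` at which `G_p` contains
a copy of `M_j`. -/
noncomputable def pMj (k j n : ℕ) (t : Finset (Fin n) → ℝ) : ℝ :=
  sSup {p : ℝ | p ∈ Set.Icc (0 : ℝ) 1 ∧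
    ∃ K C J, IsMj (complexAt k n t p) k j K C J}

/-- The threshold `p_j`. -/
noncomputable def pjThreshold (k j n : ℕ) : ℝ :=
  ((j + 1 : ℝ) * Real.log n + Real.log (Real.log n)) * (Nat.factorial (k - j)) /
    (((k - j + 1 : ℕ) : ℝ) * (n : ℝ) ^ (k - j))

/-- `p_j^-`. -/
noncomputable def pjMinus (k j n : ℕ) : ℝ :=
  (1 - 1 / Real.sqrt (Real.log n)) * ((j + 1 : ℝ) * Real.log n) * (Nat.factorial (k - j)) /
    (((k - j + 1 : ℕ) : ℝ) * (n : ℝ) ^ (k - j))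

/-- `p_{j-1}^-`. -/
noncomputable def pjPrevMinus (k j n : ℕ) : ℝ :=
  (1 - 1 / Real.sqrt (Real.log n)) * ((j : ℝ) * Real.log n) * (Nat.factorial (k - j + 1)) /
    (((k - j + 2 : ℕ) : ℝ) * (n : ℝ) ^ (k - j + 1))

/-- `p_j^{(1)}`. -/
noncomputable def pjOne (k j n : ℕ) : ℝ :=
  1 / (10 * ((j : ℝ) + 1) * (Nat.choose (k + 1) (j + 1)) * (n : ℝ) ^ (k - j))

/-- The number of copies of `M_j^-` in `G`. -/
noncomputable def countMjMinus (k j : ℕ) {n : ℕ} (G : Set (Finset (Fin n))) : ℕ :=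
  {x : Finset (Fin n) × Finset (Fin n) | IsMjMinus G k j x.1 x.2}.ncard

/-- The number of copies of `M_j^*` in `G`. -/
noncomputable def countMjStar (k j : ℕ) {n : ℕ} (G : Set (Finset (Fin n))) : ℕ :=
  {x : Finset (Fin n) × Finset (Fin n) × Fin n × Fin n |
    IsMjStar G k j x.1 x.2.1 x.2.2.1 x.2.2.2}.ncard

/-- `p_T`: the supremum of the `p ∈ [0,1]` at which `G_p` is not topologically connected,
where topological connectedness means `H^0(G_p;F₂) ≅ F₂`. -/
noncomputable def pT (k n : ℕ) (t : Finset (Fin n) → ℝ) : ℝ :=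
  sSup {p : ℝ | p ∈ Set.Icc (0 : ℝ) 1 ∧
    ¬ Nonempty (cohomology (complexAt k n t p) 0 ≃ₗ[ZMod 2] ZMod 2)}

/-!
`H^0(G;F₂)` is the space of `F₂`-valued functions on the connected components of the `1`-skeleton,
so `p_T` is the threshold for connectedness of the `1`-skeleton, and it suffices to study the graph
at the two ends of the window.

At `p = (log n - w)·k!/n^k` the expected number of isolated vertices is about
`n·exp(-p·n^k/k!) = exp w`. The events that `u` and that `v` are isolated share only the
`O(n^(k-1))` simplices containing both, so they are nearly uncorrelated and Chebyshev's inequality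
yields an isolated vertex.

At `p = (log n + w)·k!/n^k` a disconnected graph has a set `S` of `1 ≤ s ≤ n/2` vertices that no
simplex connects to its complement, and at least `s·(n - s choose k)` simplices would do so. For
`s ≤ n / log n`, bounding the number of such `S` by `n^s` shows that they contribute at most
`O(exp(-w))^s` to the union bound. For larger `s` there are only `O(log n)^s` of them, which is
beaten by the factor `n^(-s/4^k)`.
-/

/-! ### `H^0` and connectedness of the `1`-skeleton -/

section CohomologyZero

variable {G : Set (Finset V)}

/-- The `1`-skeleton of `G`, as a graph on the vertex set `V`. -/
def oneSkeleton (G : Set (Finset V)) : SimpleGraph V where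
  Adj u v := u ≠ v ∧ {u, v} ∈ G
  symm := ⟨fun u v h ↦ ⟨h.1.symm, Finset.pair_comm u v ▸ h.2⟩⟩

/-- The identification of the vertex set with the `0`-simplices, the indices of `0`-cochains. -/
noncomputable def vertexEquiv (hG : ∀ v, {v} ∈ G) : V ≃ {A : Finset V // IsSimplex G 0 A} :=
  Equiv.ofBijective (fun v ↦ ⟨{v}, hG v, Finset.card_singleton v⟩)
    ⟨fun _ _ h ↦ Finset.singleton_injective (congrArg Subtype.val h), fun A ↦ by
      obtain ⟨v, hv⟩ := Finset.card_eq_one.mp A.2.2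
      exact ⟨v, Subtype.ext hv.symm⟩⟩

lemma coboundary_zero_apply_pair (hG : ∀ v, {v} ∈ G) (f : Cochain G 0) {u v : V} (huv : u ≠ v)
    (h : IsSimplex G 1 {u, v}) :
    coboundary G 0 f ⟨{u, v}, h⟩ = f (vertexEquiv hG u) + f (vertexEquiv hG v) := by
  have hpair : Finset.powersetCard 1 {u, v} = {{u}, {v}} := by simp [Finset.powersetCard_one]
  have hu : IsSimplex G 0 {u} := (vertexEquiv hG u).2
  have hv : IsSimplex G 0 {v} := (vertexEquiv hG v).2
  simp only [coboundary, LinearMap.coe_mk, AddHom.coe_mk, zero_add, hpair]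
  rw [Finset.sum_pair (Finset.singleton_injective.ne huv), dif_pos hu, dif_pos hv]
  rfl

lemma mem_cocycles_zero_iff (hG : ∀ v, {v} ∈ G) {f : Cochain G 0} :
    f ∈ cocycles G 0 ↔
      ∀ u v, (oneSkeleton G).Adj u v → f (vertexEquiv hG u) = f (vertexEquiv hG v) := by
  rw [cocycles, LinearMap.mem_ker]
  constructor
  · rintro hf u v ⟨huv, hmem⟩
    rw [← CharTwo.add_eq_zero, ← coboundary_zero_apply_pair hG f huv ⟨hmem, Finset.card_pair huv⟩,
      hf, Pi.zero_apply]
  · intro hf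
    funext ⟨A, hA⟩
    obtain ⟨u, v, huv, rfl⟩ := Finset.card_eq_two.mp hA.2
    rw [coboundary_zero_apply_pair hG f huv hA, Pi.zero_apply, CharTwo.add_eq_zero]
    exact hf u v ⟨huv, hA.1⟩

lemma apply_vertexEquiv_eq_of_walk (hG : ∀ v, {v} ∈ G) {f : Cochain G 0}
    (hf : f ∈ cocycles G 0) {u v : V} (w : (oneSkeleton G).Walk u v) :
    f (vertexEquiv hG u) = f (vertexEquiv hG v) := by
  induction w with
  | nil => rfl
  | cons h _ ih => exact ((mem_cocycles_zero_iff hG).mp hf _ _ h).trans ih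

/-- The `0`-cocycles are the functions that are constant on every connected component of the
`1`-skeleton. -/
noncomputable def cocyclesZeroEquiv (hG : ∀ v, {v} ∈ G) :
    cocycles G 0 ≃ₗ[ZMod 2] ((oneSkeleton G).ConnectedComponent → ZMod 2) where
  toFun f c := c.lift (fun v ↦ f.1 (vertexEquiv hG v))
    fun _ _ w _ ↦ apply_vertexEquiv_eq_of_walk hG f.2 w
  invFun g := ⟨fun A ↦ g ((oneSkeleton G).connectedComponentMk ((vertexEquiv hG).symm A)),
    (mem_cocycles_zero_iff hG).mpr fun u v huv ↦ by
      simp only [Equiv.symm_apply_apply, SimpleGraph.ConnectedComponent.sound huv.reachable]⟩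
  map_add' f g := funext <| SimpleGraph.ConnectedComponent.ind fun _ ↦ rfl
  map_smul' a f := funext <| SimpleGraph.ConnectedComponent.ind fun _ ↦ rfl
  left_inv f := by ext A; simp
  right_inv g := funext <| SimpleGraph.ConnectedComponent.ind fun v ↦ by simp

/-- `H^0(G;F₂)` is the space of `F₂`-valued functions on the set of connected components of the
`1`-skeleton. -/
noncomputable def cohomologyZeroEquiv (hG : ∀ v, {v} ∈ G) :
    cohomology G 0 ≃ₗ[ZMod 2] ((oneSkeleton G).ConnectedComponent → ZMod 2) :=
  (Submodule.quotEquivOfEqBot _ (by simp [coboundaries])).trans (cocyclesZeroEquiv hG)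

lemma nonempty_linearEquiv_self_iff_nonempty_unique {F ι : Type*} [Field F] [Finite F] :
    Nonempty ((ι → F) ≃ₗ[F] F) ↔ Nonempty (Unique ι) := by
  refine ⟨fun ⟨e⟩ ↦ ?_, fun ⟨_⟩ ↦ ⟨LinearEquiv.funUnique ι F F⟩⟩
  have : Finite (ι → F) := Finite.of_equiv F e.symm.toEquiv
  have : Finite ι := by
    by_contra hι
    rw [not_finite_iff_infinite] at hι
    exact not_finite (ι → F)
  have hcard : Nat.card F ^ Nat.card ι = Nat.card F := by
    rw [← Nat.card_fun, Nat.card_congr e.toEquiv]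
  rw [Nat.pow_eq_self_iff Finite.one_lt_card, Nat.card_eq_one_iff_unique] at hcard
  exact (unique_iff_subsingleton_and_nonempty ι).mpr hcard

lemma connected_iff_nonempty_unique_connectedComponent {H : SimpleGraph V} :
    H.Connected ↔ Nonempty (Unique H.ConnectedComponent) := by
  rw [unique_iff_subsingleton_and_nonempty, SimpleGraph.connected_iff]
  refine and_congr ⟨fun h ↦ h.subsingleton_connectedComponent, fun h u v ↦ ?_⟩ ?_
  · exact SimpleGraph.ConnectedComponent.exact (Subsingleton.elim _ _)
  · exact ⟨fun ⟨v⟩ ↦ ⟨H.connectedComponentMk v⟩, fun ⟨c⟩ ↦ c.exists_rep.nonempty⟩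

theorem nonempty_cohomology_zero_equiv_iff_connected (hG : ∀ v, {v} ∈ G) :
    Nonempty (cohomology G 0 ≃ₗ[ZMod 2] ZMod 2) ↔ (oneSkeleton G).Connected := by
  rw [connected_iff_nonempty_unique_connectedComponent,
    ← nonempty_linearEquiv_self_iff_nonempty_unique (F := ZMod 2)]
  exact ⟨fun ⟨e⟩ ↦ ⟨(cohomologyZeroEquiv hG).symm.trans e⟩,
    fun ⟨e⟩ ↦ ⟨(cohomologyZeroEquiv hG).trans e⟩⟩

end CohomologyZero

lemma connected_of_forall_exists_adj [Fintype V] [Nonempty V] {H : SimpleGraph V}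
    (h : ∀ S : Finset V, S.Nonempty → 2 * S.card ≤ Fintype.card V →
      ∃ u ∈ S, ∃ v ∉ S, H.Adj u v) : H.Connected := by
  refine ⟨fun u v ↦ by_contra fun huv ↦ ?_⟩
  set S : Finset V := {w | H.Reachable u w}
  rcases le_total (2 * S.card) (Fintype.card V) with hcard | hcard
  · obtain ⟨x, hx, y, hy, hxy⟩ := h S ⟨u, by simp [S]⟩ hcard
    simp only [S, Finset.mem_filter_univ] at hx hy
    exact hy (hx.trans hxy.reachable)
  · obtain ⟨x, hx, y, hy, hxy⟩ := h Sᶜ ⟨v, by simpa [S] using huv⟩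
      (by rw [Finset.card_compl]; lia)
    simp only [S, Finset.mem_compl, Finset.mem_filter_univ, not_not] at hx hy
    exact hx (hy.trans hxy.symm.reachable)

/-! ### The random complex and its cuts -/

section Facets

variable [Fintype V]

/-- The `(k + 1)`-sets containing `T`, that is, the potential `k`-simplices of the star of `T`. -/
noncomputable def facetsContaining (k : ℕ) (T : Finset V) : Finset (Finset V) :=
  {K ∈ Finset.powersetCard (k + 1) Finset.univ | T ⊆ K}

/-- The `(k + 1)`-sets meeting both `S` and its complement, that is, the potential `k`-simplices
that connect the two sides of the cut `(S, Sᶜ)`. -/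
noncomputable def facetsCrossing (k : ℕ) (S : Finset V) : Finset (Finset V) :=
  {K ∈ Finset.powersetCard (k + 1) Finset.univ | (∃ u ∈ K, u ∈ S) ∧ ∃ v ∈ K, v ∉ S}

lemma mem_facetsContaining {k : ℕ} {T K : Finset V} :
    K ∈ facetsContaining k T ↔ K.card = k + 1 ∧ T ⊆ K := by
  simp [facetsContaining]

lemma mem_facetsCrossing {k : ℕ} {S K : Finset V} :
    K ∈ facetsCrossing k S ↔ K.card = k + 1 ∧ (∃ u ∈ K, u ∈ S) ∧ ∃ v ∈ K, v ∉ S := by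
  simp [facetsCrossing]

lemma card_facetsContaining_le (k : ℕ) (T : Finset V) :
    (facetsContaining k T).card ≤ (Fintype.card V).choose (k + 1 - T.card) := by
  rcases le_or_gt T.card (k + 1) with hT | hT
  · rw [facetsContaining, Finset.card_filter_powersetCard_subset T _ _ T.subset_univ hT,
      Finset.card_univ]
    exact Nat.choose_le_choose _ (Nat.sub_le _ _)
  · have hempty : facetsContaining k T = ∅ := by
      refine Finset.eq_empty_of_forall_notMem fun K hK ↦ ?_
      obtain ⟨hcard, hsub⟩ := mem_facetsContaining.mp hK
      exact absurd (Finset.card_le_card hsub) (by lia)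
    simp [hempty]

lemma facetsContaining_inter (k : ℕ) (T U : Finset V) :
    facetsContaining k T ∩ facetsContaining k U = facetsContaining k (T ∪ U) := by
  ext K
  simp only [Finset.mem_inter, mem_facetsContaining, Finset.union_subset_iff]
  tauto

lemma card_facetsContaining_inter_le (k : ℕ) {u v : V} (huv : u ≠ v) :
    (facetsContaining k {u} ∩ facetsContaining k {v}).card ≤ Fintype.card V ^ (k - 1) := by
  rw [facetsContaining_inter]
  refine (card_facetsContaining_le k _).trans ?_
  rw [Finset.singleton_union, Finset.card_pair huv, Nat.add_sub_add_right k 1 1]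
  exact Nat.choose_le_pow _ _

lemma card_mul_choose_le_card_facetsCrossing {k : ℕ} (hk : 1 ≤ k) (S : Finset V) :
    S.card * (Fintype.card V - S.card).choose k ≤ (facetsCrossing k S).card := by
  rw [← Finset.card_compl, ← Finset.card_powersetCard, ← Finset.card_product]
  refine Finset.card_le_card_of_injOn (fun x ↦ insert x.1 x.2) ?_ ?_
  · rintro ⟨v, A⟩ h
    simp only [Finset.coe_product, Set.mem_prod, Finset.mem_coe, Finset.mem_powersetCard] at h
    obtain ⟨hv, hA, hcard⟩ := h
    have hvA : v ∉ A := fun h ↦ Finset.mem_compl.mp (hA h) hv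
    obtain ⟨w, hw⟩ : A.Nonempty := Finset.card_pos.mp (by lia)
    exact mem_facetsCrossing.mpr ⟨by rw [Finset.card_insert_of_notMem hvA, hcard],
      ⟨v, Finset.mem_insert_self v A, hv⟩,
      ⟨w, Finset.mem_insert_of_mem hw, Finset.mem_compl.mp (hA hw)⟩⟩
  · have hinter : ∀ v ∈ S, ∀ A ⊆ Sᶜ, insert v A ∩ S = {v} ∧ insert v A \ S = A := by
      intro v hv A hA
      have hdisj : Disjoint A S := Finset.subset_compl_iff_disjoint_right.mp hA
      rw [Finset.insert_inter_of_mem hv, Finset.disjoint_iff_inter_eq_empty.mp hdisj,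
        Finset.insert_sdiff_of_mem A hv, hdisj.sdiff_eq_left]
      exact ⟨rfl, rfl⟩
    rintro ⟨v, A⟩ h ⟨w, B⟩ h' heq
    simp only [Finset.coe_product, Set.mem_prod, Finset.mem_coe, Finset.mem_powersetCard] at h h'
    simp only at heq
    obtain ⟨hvS, hA⟩ := hinter v h.1 A h.2.1
    obtain ⟨hwS, hB⟩ := hinter w h'.1 B h'.2.1
    rw [heq] at hvS hA
    rw [← hA, hB, Finset.singleton_injective (hvS.symm.trans hwS)]

end Facets

/-- The event that all the coordinates indexed by `F` (in the application, all the birth times of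
the simplices in `F`) exceed `p`. -/
def bornAfter {ι : Type*} (p : ℝ) (F : Finset ι) : Set (ι → ℝ) :=
  (F : Set ι).pi fun _ ↦ Set.Ioi p

lemma mem_bornAfter {ι : Type*} {p : ℝ} {F : Finset ι} {x : ι → ℝ} :
    x ∈ bornAfter p F ↔ ∀ i ∈ F, p < x i := Iff.rfl

section ComplexAt

variable {k n : ℕ} {t : Finset (Fin n) → ℝ} {p q : ℝ}

lemma singleton_mem_complexAt (v : Fin n) : {v} ∈ complexAt k n t p := Or.inl ⟨v, rfl⟩

lemma oneSkeleton_complexAt_adj {u v : Fin n} :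
    (oneSkeleton (complexAt k n t p)).Adj u v ↔
      u ≠ v ∧ ∃ K : Finset (Fin n), K.card = k + 1 ∧ t K ≤ p ∧ u ∈ K ∧ v ∈ K := by
  refine and_congr_right fun huv ↦ ⟨?_, ?_⟩
  · rintro (⟨w, hw⟩ | ⟨-, K, hcard, htK, hsub⟩)
    · have hsub := hw.subset
      simp only [Finset.insert_subset_iff, Finset.singleton_subset_iff,
        Finset.mem_singleton] at hsub
      exact absurd (hsub.1.trans hsub.2.symm) huv
    · exact ⟨K, hcard, htK, hsub (by simp), hsub (by simp)⟩
  · rintro ⟨K, hcard, htK, hu, hv⟩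
    exact Or.inr ⟨⟨u, by simp⟩, K, hcard, htK, by simp [Finset.insert_subset_iff, hu, hv]⟩

lemma oneSkeleton_complexAt_mono (hpq : p ≤ q) :
    oneSkeleton (complexAt k n t p) ≤ oneSkeleton (complexAt k n t q) := by
  intro u v
  simp only [oneSkeleton_complexAt_adj]
  rintro ⟨huv, K, hcard, htK, hK⟩
  exact ⟨huv, K, hcard, htK.trans hpq, hK⟩

lemma pT_eq_sSup_not_connected :
    pT k n t = sSup {p ∈ Set.Icc (0 : ℝ) 1 | ¬ (oneSkeleton (complexAt k n t p)).Connected} := by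
  simp only [pT, nonempty_cohomology_zero_equiv_iff_connected singleton_mem_complexAt]

lemma le_pT_of_not_connected (hp : p ∈ Set.Icc 0 1)
    (h : ¬ (oneSkeleton (complexAt k n t p)).Connected) : p ≤ pT k n t := by
  rw [pT_eq_sSup_not_connected]
  exact le_csSup ⟨1, fun x hx ↦ hx.1.2⟩ ⟨hp, h⟩

lemma pT_le_of_connected (hq : 0 ≤ q) (h : (oneSkeleton (complexAt k n t q)).Connected) :
    pT k n t ≤ q := by
  rw [pT_eq_sSup_not_connected]
  refine Real.sSup_le (fun p hp ↦ ?_) hq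
  by_contra! hqp
  exact hp.2 (h.mono (oneSkeleton_complexAt_mono hqp.le))

lemma not_connected_of_mem_bornAfter_facetsContaining (hn : 2 ≤ n) {v : Fin n}
    (h : t ∈ bornAfter p (facetsContaining k {v})) :
    ¬ (oneSkeleton (complexAt k n t p)).Connected := by
  have : Nontrivial (Fin n) := Fin.nontrivial_iff_two_le.mpr hn
  intro hconn
  refine hconn.preconnected.not_isIsolated v fun u huv ↦ ?_
  obtain ⟨-, K, hcard, htK, hv, -⟩ := oneSkeleton_complexAt_adj.mp huv
  exact htK.not_gt (mem_bornAfter.mp h K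
    (mem_facetsContaining.mpr ⟨hcard, Finset.singleton_subset_iff.mpr hv⟩))

lemma connected_of_forall_notMem_bornAfter_facetsCrossing (hn : 1 ≤ n)
    (h : ∀ S : Finset (Fin n), S.Nonempty → 2 * S.card ≤ n →
      t ∉ bornAfter p (facetsCrossing k S)) :
    (oneSkeleton (complexAt k n t p)).Connected := by
  have : Nonempty (Fin n) := Fin.pos_iff_nonempty.mp hn
  refine connected_of_forall_exists_adj fun S hS hcard ↦ ?_
  have hborn := h S hS (by simpa using hcard)
  simp only [mem_bornAfter, not_forall, not_lt] at hborn
  obtain ⟨K, hK, htK⟩ := hborn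
  obtain ⟨hKcard, ⟨u, huK, huS⟩, v, hvK, hvS⟩ := mem_facetsCrossing.mp hK
  exact ⟨u, huS, v, hvS, oneSkeleton_complexAt_adj.mpr
    ⟨ne_of_mem_of_not_mem huS hvS, K, hKcard, htK, huK, hvK⟩⟩

end ComplexAt

/-! ### Probabilistic tools -/

section BirthTimes

instance isProbabilityMeasure_volume_restrict_Icc_zero_one :
    IsProbabilityMeasure (volume.restrict (Set.Icc (0 : ℝ) 1)) := ⟨by simp⟩

instance isProbabilityMeasure_birthMeasure (n : ℕ) : IsProbabilityMeasure (birthMeasure n) := by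
  unfold birthMeasure
  infer_instance

variable {ι : Type*}

lemma measurableSet_bornAfter (p : ℝ) (F : Finset ι) : MeasurableSet (bornAfter p F) :=
  MeasurableSet.pi F.countable_toSet fun _ _ ↦ measurableSet_Ioi

lemma bornAfter_inter (p : ℝ) (F₁ F₂ : Finset ι) :
    bornAfter p F₁ ∩ bornAfter p F₂ = bornAfter p (F₁ ∪ F₂) := by
  rw [bornAfter, bornAfter, bornAfter, Finset.coe_union, Set.union_pi]

variable [Fintype ι] {p : ℝ}

lemma measureReal_bornAfter (hp : p ∈ Set.Icc 0 1) (F : Finset ι) :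
    (Measure.pi fun _ : ι ↦ volume.restrict (Set.Icc (0 : ℝ) 1)).real (bornAfter p F) =
      (1 - p) ^ F.card := by
  have hIoi : Set.Ioi p ∩ Set.Icc 0 1 = Set.Ioc p 1 := by
    ext x
    simp only [Set.mem_inter_iff, Set.mem_Ioi, Set.mem_Icc, Set.mem_Ioc]
    exact ⟨fun h ↦ ⟨h.1, h.2.2⟩, fun h ↦ ⟨h.1, hp.1.trans h.1.le, h.2⟩⟩
  rw [bornAfter, measureReal_def, Measure.pi_pi_finset, Finset.prod_const, ENNReal.toReal_pow,
    Measure.restrict_apply measurableSet_Ioi, hIoi, Real.volume_Ioc,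
    ENNReal.toReal_ofReal (sub_nonneg.mpr hp.2)]

lemma measureReal_bornAfter_inter_mul (hp : p ∈ Set.Icc 0 1) (F₁ F₂ : Finset ι) :
    letI μ := Measure.pi fun _ : ι ↦ volume.restrict (Set.Icc (0 : ℝ) 1)
    μ.real (bornAfter p F₁ ∩ bornAfter p F₂) * (1 - p) ^ (F₁ ∩ F₂).card =
      μ.real (bornAfter p F₁) * μ.real (bornAfter p F₂) := by
  rw [bornAfter_inter]
  simp only [measureReal_bornAfter hp, ← pow_add, Finset.card_union_add_card_inter]

lemma measureReal_bornAfter_inter_le (hp : p ∈ Set.Icc 0 1) {F₁ F₂ : Finset ι} {x : ℝ}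
    (hcard : p * (F₁ ∩ F₂).card ≤ x) (hx : x ≤ 1 / 2) :
    letI μ := Measure.pi fun _ : ι ↦ volume.restrict (Set.Icc (0 : ℝ) 1)
    μ.real (bornAfter p F₁ ∩ bornAfter p F₂) ≤
      (1 + 2 * x) * (μ.real (bornAfter p F₁) * μ.real (bornAfter p F₂)) := by
  have hx0 : 0 ≤ x := (mul_nonneg hp.1 (Nat.cast_nonneg _)).trans hcard
  have hbernoulli : 1 - x ≤ (1 - p) ^ (F₁ ∩ F₂).card := by
    have h := one_add_mul_le_pow (show -2 ≤ -p by linarith [hp.2]) (F₁ ∩ F₂).card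
    rw [← sub_eq_add_neg] at h
    linarith
  have hone : 1 ≤ (1 + 2 * x) * (1 - p) ^ (F₁ ∩ F₂).card :=
    calc 1 ≤ (1 + 2 * x) * (1 - x) := by nlinarith
      _ ≤ (1 + 2 * x) * (1 - p) ^ (F₁ ∩ F₂).card := by gcongr
  rw [← measureReal_bornAfter_inter_mul hp, mul_left_comm]
  exact le_mul_of_one_le_right measureReal_nonneg hone

end BirthTimes

section SecondMoment

open ProbabilityTheory

variable {Ω ι : Type*} [MeasurableSpace Ω] {μ : Measure Ω}

lemma memLp_indicator_one [IsFiniteMeasure μ] (r : ENNReal) {A : Set Ω} (hA : MeasurableSet A) :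
    MemLp (A.indicator (1 : Ω → ℝ)) r μ :=
  memLp_indicator_const r hA 1 (.inr (measure_ne_top μ A))

variable [IsProbabilityMeasure μ]

lemma covariance_indicator_one {A B : Set Ω} (hA : MeasurableSet A) (hB : MeasurableSet B) :
    cov[A.indicator 1, B.indicator 1; μ] = μ.real (A ∩ B) - μ.real A * μ.real B := by
  rw [covariance_eq_sub (memLp_indicator_one 2 hA) (memLp_indicator_one 2 hB),
    ← Set.inter_indicator_one, integral_indicator_one (hA.inter hB), integral_indicator_one hA,
    integral_indicator_one hB]

variable [Fintype ι] {A : ι → Set Ω} {ε : ℝ}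

lemma variance_sum_indicator_le (hA : ∀ i, MeasurableSet (A i)) (hε : 0 ≤ ε)
    (hcorr : Pairwise fun i j ↦ μ.real (A i ∩ A j) ≤ (1 + ε) * (μ.real (A i) * μ.real (A j))) :
    Var[∑ i, (A i).indicator 1; μ] ≤ ∑ i, μ.real (A i) + ε * (∑ i, μ.real (A i)) ^ 2 := by
  have hcov : ∀ i j, cov[(A i).indicator 1, (A j).indicator 1; μ] ≤
      (if i = j then μ.real (A i) else 0) + ε * (μ.real (A i) * μ.real (A j)) := by
    intro i j
    rw [covariance_indicator_one (hA i) (hA j)]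
    split_ifs with hij
    · subst hij
      rw [Set.inter_self]
      nlinarith [mul_self_nonneg (μ.real (A i))]
    · linarith [hcorr hij]
  rw [variance_sum fun i ↦ memLp_indicator_one 2 (hA i)]
  refine (Finset.sum_le_sum fun i _ ↦ Finset.sum_le_sum fun j _ ↦ hcov i j).trans_eq ?_
  simp only [Finset.sum_add_distrib, Finset.sum_ite_eq, Finset.mem_univ, if_true,
    ← Finset.mul_sum, ← Finset.sum_mul, sq]

theorem measureReal_iInter_compl_le (hA : ∀ i, MeasurableSet (A i)) (hε : 0 ≤ ε)
    (hcorr : Pairwise fun i j ↦ μ.real (A i ∩ A j) ≤ (1 + ε) * (μ.real (A i) * μ.real (A j)))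
    (hpos : 0 < ∑ i, μ.real (A i)) :
    μ.real (⋂ i, (A i)ᶜ) ≤ 1 / ∑ i, μ.real (A i) + ε := by
  set m := ∑ i, μ.real (A i)
  set X : Ω → ℝ := ∑ i, (A i).indicator 1
  have hX : MemLp X 2 μ := memLp_finsetSum' _ fun i _ ↦ memLp_indicator_one 2 (hA i)
  have hmean : μ[X] = m := by
    simp only [X, Finset.sum_apply]
    rw [integral_finsetSum _ fun i _ ↦
      memLp_one_iff_integrable.mp (memLp_indicator_one 1 (hA i))]
    exact Finset.sum_congr rfl fun i _ ↦ integral_indicator_one (hA i)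
  have hsub : ⋂ i, (A i)ᶜ ⊆ {x | m ≤ |X x - μ[X]|} := by
    intro x hx
    have hzero : X x = 0 := by
      simp only [X, Finset.sum_apply]
      exact Finset.sum_eq_zero fun i _ ↦ Set.indicator_of_notMem (Set.mem_iInter.mp hx i) _
    simp [hzero, hmean, abs_of_pos hpos]
  calc μ.real (⋂ i, (A i)ᶜ) ≤ μ.real {x | m ≤ |X x - μ[X]|} := measureReal_mono hsub
    _ ≤ Var[X; μ] / m ^ 2 := by
        refine ENNReal.toReal_le_of_le_ofReal
          (div_nonneg (variance_nonneg X μ) (sq_nonneg m)) ?_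
        exact meas_ge_le_variance_div_sq hX hpos
    _ ≤ (m + ε * m ^ 2) / m ^ 2 := by
        gcongr
        exact variance_sum_indicator_le hA hε hcorr
    _ = 1 / m + ε := by field_simp

end SecondMoment

lemma tendsto_measure_one_of_compl_subset {α : Type*} {l : Filter α} {Ω : α → Type*}
    [∀ a, MeasurableSpace (Ω a)] {μ : ∀ a, Measure (Ω a)} [∀ a, IsProbabilityMeasure (μ a)]
    {s t : ∀ a, Set (Ω a)} (hst : ∀ᶠ a in l, (s a)ᶜ ⊆ t a)
    (ht : Tendsto (fun a ↦ (μ a).real (t a)) l (nhds 0)) :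
    Tendsto (fun a ↦ μ a (s a)) l (nhds 1) := by
  have ht' : Tendsto (fun a ↦ μ a (t a)) l (nhds 0) := by
    rwa [← ENNReal.tendsto_toReal_zero_iff fun a ↦ measure_ne_top (μ a) (t a)]
  have hlower : Tendsto (fun a ↦ 1 - μ a (t a)) l (nhds 1) := by
    simpa using ENNReal.Tendsto.sub tendsto_const_nhds ht' (.inl ENNReal.one_ne_top)
  refine tendsto_of_tendsto_of_tendsto_of_le_of_le' hlower tendsto_const_nhds ?_
    (.of_forall fun a ↦ prob_le_one)
  filter_upwards [hst] with a ha
  rw [tsub_le_iff_right, ← measure_univ (μ := μ a), ← Set.union_compl_self (s a)]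
  exact (measure_union_le _ _).trans (by gcongr)

/-! ### Below the threshold: isolated vertices -/

lemma exp_neg_add_two_mul_sq_le_one_sub {x : ℝ} (hx : x ≤ 1 / 2) :
    Real.exp (-(x + 2 * x ^ 2)) ≤ 1 - x := by
  have hpos : 0 < 1 - x := by linarith
  have hinv : (1 - x)⁻¹ ≤ 1 + x + 2 * x ^ 2 := by
    rw [inv_le_iff_one_le_mul₀ hpos]
    nlinarith [mul_nonneg (sq_nonneg x) (by linarith : 0 ≤ 1 - 2 * x)]
  rw [← Real.le_log_iff_exp_le hpos]
  linarith [Real.one_sub_inv_le_log_of_pos hpos]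

section SubThreshold

variable {k n : ℕ} {p : ℝ}

lemma exp_le_measureReal_bornAfter_facetsContaining (hp0 : 0 ≤ p) (hp : p ≤ 1 / 2) (v : Fin n) :
    Real.exp (-((p + 2 * p ^ 2) * (n ^ k / k.factorial))) ≤
      (birthMeasure n).real (bornAfter p (facetsContaining k {v})) := by
  have hcard : ((facetsContaining k {v}).card : ℝ) ≤ n ^ k / k.factorial := by
    refine le_trans ?_ (Nat.choose_le_pow_div k n)
    exact_mod_cast by simpa using card_facetsContaining_le k {v}
  rw [birthMeasure, measureReal_bornAfter ⟨hp0, by linarith⟩]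
  calc Real.exp (-((p + 2 * p ^ 2) * (n ^ k / k.factorial)))
      ≤ Real.exp (-((p + 2 * p ^ 2) * (facetsContaining k {v}).card)) := by gcongr
    _ = Real.exp (-(p + 2 * p ^ 2)) ^ (facetsContaining k {v}).card := by
        rw [← Real.exp_nat_mul]
        ring_nf
    _ ≤ (1 - p) ^ (facetsContaining k {v}).card := by
        gcongr
        exact exp_neg_add_two_mul_sq_le_one_sub hp

lemma measureReal_bornAfter_facetsContaining_inter_le (hp0 : 0 ≤ p) (hp1 : p ≤ 1)
    (hp : p * n ^ (k - 1) ≤ 1 / 2) {u v : Fin n} (huv : u ≠ v) :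
    letI A := fun v : Fin n ↦ bornAfter p (facetsContaining k {v})
    (birthMeasure n).real (A u ∩ A v) ≤ (1 + 2 * (p * n ^ (k - 1))) *
      ((birthMeasure n).real (A u) * (birthMeasure n).real (A v)) := by
  refine measureReal_bornAfter_inter_le ⟨hp0, hp1⟩ ?_ hp
  gcongr
  have hcard := card_facetsContaining_inter_le k huv
  rw [Fintype.card_fin] at hcard
  exact_mod_cast by convert hcard

theorem measureReal_connected_le (hn : 2 ≤ n) (hp0 : 0 ≤ p)
    (hp : p * n ^ (k - 1) ≤ 1 / 2) :
    (birthMeasure n).real {t | (oneSkeleton (complexAt k n t p)).Connected} ≤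
      Real.exp ((p + 2 * p ^ 2) * (n ^ k / k.factorial)) / n + 2 * (p * n ^ (k - 1)) := by
  set A : Fin n → Set (Finset (Fin n) → ℝ) := fun v ↦ bornAfter p (facetsContaining k {v})
  set q := Real.exp (-((p + 2 * p ^ 2) * (n ^ k / k.factorial)))
  have hp' : p ≤ 1 / 2 :=
    (le_mul_of_one_le_right hp0 (one_le_pow₀ (by exact_mod_cast (by lia : 1 ≤ n)))).trans hp
  have hmean : n * q ≤ ∑ v, (birthMeasure n).real (A v) := by
    simpa using Finset.card_nsmul_le_sum Finset.univ _ q fun v _ ↦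
      exp_le_measureReal_bornAfter_facetsContaining (k := k) hp0 hp' v
  have hnq : 0 < n * q := mul_pos (by exact_mod_cast (by lia : 0 < n)) (Real.exp_pos _)
  have hsub : {t | (oneSkeleton (complexAt k n t p)).Connected} ⊆ ⋂ v, (A v)ᶜ :=
    fun t ht ↦ Set.mem_iInter.mpr fun v hv ↦
      not_connected_of_mem_bornAfter_facetsContaining hn hv ht
  calc (birthMeasure n).real {t | (oneSkeleton (complexAt k n t p)).Connected}
      ≤ (birthMeasure n).real (⋂ v, (A v)ᶜ) := measureReal_mono hsub
    _ ≤ 1 / ∑ v, (birthMeasure n).real (A v) + 2 * (p * n ^ (k - 1)) :=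
        measureReal_iInter_compl_le (fun v ↦ measurableSet_bornAfter p _) (by positivity)
          (fun u v huv ↦ measureReal_bornAfter_facetsContaining_inter_le hp0
            (by linarith) hp huv) (hnq.trans_le hmean)
    _ ≤ 1 / (n * q) + 2 * (p * n ^ (k - 1)) := by gcongr
    _ = Real.exp ((p + 2 * p ^ 2) * (n ^ k / k.factorial)) / n + 2 * (p * n ^ (k - 1)) := by
        rw [mul_comm (n : ℝ) q, ← div_div, one_div, ← Real.exp_neg, neg_neg]

lemma measureReal_connected_at_log_sub_le (hk : 1 ≤ k) (hn : 2 ≤ n) {w : ℝ} (hw : 0 ≤ w)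
    (hwn : w ≤ Real.log n) (hlog : k.factorial * Real.log n / n ≤ 1 / 2) :
    (birthMeasure n).real {t | (oneSkeleton (complexAt k n t
      ((Real.log n - w) * k.factorial / (n : ℝ) ^ k))).Connected} ≤
      Real.exp (2 * (k.factorial * Real.log n ^ 2 / n) - w) +
        2 * (k.factorial * Real.log n / n) := by
  set L := Real.log n
  set y := k.factorial * L / n with hy
  set p := (L - w) * k.factorial / (n : ℝ) ^ k with hp
  have hn0 : (0 : ℝ) < n := by exact_mod_cast (by lia : 0 < n)
  have hp0 : 0 ≤ p := div_nonneg (mul_nonneg (by linarith) (Nat.cast_nonneg _)) (by positivity)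
  have hpy : p * n ^ (k - 1) ≤ y :=
    calc p * n ^ (k - 1) = k.factorial * (L - w) / n := by
          rw [hp, ← pow_sub_one_mul (by lia : k ≠ 0)]
          field_simp
      _ ≤ y := by rw [hy]; gcongr; linarith
  have hpy' : p ≤ y :=
    (le_mul_of_one_le_right hp0 (one_le_pow₀ (by exact_mod_cast (by lia : 1 ≤ n)))).trans hpy
  have hexp : (p + 2 * p ^ 2) * (n ^ k / k.factorial) ≤ L + (2 * (y * L) - w) :=
    calc (p + 2 * p ^ 2) * (n ^ k / k.factorial) = (1 + 2 * p) * (L - w) := by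
          rw [hp]
          field_simp
      _ ≤ L + (2 * (y * L) - w) := by
          nlinarith [mul_le_mul hpy' (by linarith : L - w ≤ L) (by linarith) (hp0.trans hpy')]
  calc _ ≤ Real.exp ((p + 2 * p ^ 2) * (n ^ k / k.factorial)) / n + 2 * (p * n ^ (k - 1)) :=
        measureReal_connected_le hn hp0 (hpy.trans hlog)
    _ ≤ Real.exp (L + (2 * (y * L) - w)) / n + 2 * y := by gcongr
    _ = Real.exp (2 * (k.factorial * L ^ 2 / n) - w) + 2 * y := by
        rw [Real.exp_add, Real.exp_log hn0, mul_div_cancel_left₀ _ hn0.ne', hy]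
        ring_nf

end SubThreshold

lemma tendsto_mul_log_pow_div_atTop (c : ℝ) (j : ℕ) :
    Tendsto (fun n : ℕ ↦ c * Real.log n ^ j / n) atTop (nhds 0) := by
  have h := ((Real.isLittleO_pow_log_id_atTop (n := j)).tendsto_div_nhds_zero.comp
    (tendsto_natCast_atTop_atTop (R := ℝ))).const_mul c
  simpa only [Function.comp_def, id, mul_zero, mul_div_assoc] using h

theorem tendsto_measureReal_connected_at_log_sub {k : ℕ} (hk : 1 ≤ k) {w : ℕ → ℝ}
    (hw : Tendsto w atTop atTop) (hwn : ∀ n, w n ≤ Real.log n) :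
    Tendsto (fun n : ℕ ↦ (birthMeasure n).real {t | (oneSkeleton (complexAt k n t
      ((Real.log n - w n) * k.factorial / (n : ℝ) ^ k))).Connected}) atTop (nhds 0) := by
  have hy := tendsto_mul_log_pow_div_atTop k.factorial 1
  simp only [pow_one] at hy
  have hexp : Tendsto (fun n : ℕ ↦ Real.exp (2 * (k.factorial * Real.log n ^ 2 / n) - w n))
      atTop (nhds 0) := by
    refine Real.tendsto_exp_atBot.comp ?_
    simp only [sub_eq_add_neg]
    exact ((tendsto_mul_log_pow_div_atTop _ 2).const_mul 2).add_atBot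
      (tendsto_neg_atTop_atBot.comp hw)
  refine squeeze_zero' (.of_forall fun n ↦ measureReal_nonneg) ?_
    (by simpa using hexp.add (hy.const_mul 2))
  filter_upwards [eventually_ge_atTop 2, hw.eventually_ge_atTop 0,
    hy.eventually_le_const (by norm_num : (0 : ℝ) < 1 / 2)] with n hn hw0 hlog
  exact measureReal_connected_at_log_sub_le hk hn hw0 (hwn n) hlog

/-! ### Above the threshold: cuts -/

section SuperThreshold

variable {k n : ℕ} {p : ℝ}

lemma measureReal_bornAfter_facetsCrossing_le (hk : 1 ≤ k) (hp : p ∈ Set.Icc 0 1)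
    (S : Finset (Fin n)) :
    (birthMeasure n).real (bornAfter p (facetsCrossing k S)) ≤
      Real.exp (-(p * (S.card * (n - S.card).choose k))) := by
  have hcard : S.card * (n - S.card).choose k ≤ (facetsCrossing k S).card := by
    simpa using card_mul_choose_le_card_facetsCrossing hk S
  have h0 : 0 ≤ 1 - p := sub_nonneg.mpr hp.2
  calc (birthMeasure n).real (bornAfter p (facetsCrossing k S))
      = (1 - p) ^ (facetsCrossing k S).card := measureReal_bornAfter hp _
    _ ≤ (1 - p) ^ (S.card * (n - S.card).choose k) :=
        pow_le_pow_of_le_one h0 (by linarith [hp.1]) hcard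
    _ ≤ Real.exp (-p) ^ (S.card * (n - S.card).choose k) := by
        gcongr
        exact Real.one_sub_le_exp_neg p
    _ = Real.exp (-(p * (S.card * (n - S.card).choose k))) := by
        rw [← Real.exp_nat_mul]
        push_cast
        ring_nf

theorem measureReal_not_connected_le (hk : 1 ≤ k) (hn : 1 ≤ n) (hp : p ∈ Set.Icc 0 1) :
    (birthMeasure n).real {t | ¬ (oneSkeleton (complexAt k n t p)).Connected} ≤
      ∑ s ∈ Finset.Icc 1 (n / 2),
        n.choose s * Real.exp (-(p * (s * (n - s).choose k))) := by
  have hsub : {t | ¬ (oneSkeleton (complexAt k n t p)).Connected} ⊆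
      ⋃ s ∈ Finset.Icc 1 (n / 2), ⋃ S ∈ Finset.powersetCard s Finset.univ,
        bornAfter p (facetsCrossing k S) := by
    intro t ht
    contrapose! ht
    simp only [Set.mem_iUnion, not_exists] at ht
    refine not_not.mpr (connected_of_forall_notMem_bornAfter_facetsCrossing hn
      fun S hS hcard ↦ ht S.card (Finset.mem_Icc.mpr ⟨hS.card_pos, by lia⟩) S ?_)
    exact Finset.mem_powersetCard.mpr ⟨S.subset_univ, rfl⟩
  refine (measureReal_mono hsub (measure_ne_top _ _)).trans <|
    (measureReal_biUnion_finset_le _ _).trans <| Finset.sum_le_sum fun s _ ↦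
    (measureReal_biUnion_finset_le _ _).trans ?_
  refine (Finset.sum_le_card_nsmul _ _ (Real.exp (-(p * (s * (n - s).choose k)))) ?_).trans_eq
    (by simp [nsmul_eq_mul])
  intro S hS
  rw [← (Finset.mem_powersetCard.mp hS).2]
  exact measureReal_bornAfter_facetsCrossing_le hk hp S

lemma one_sub_div_pow_le_factorial_mul_choose_div {s : ℕ} (hn : 1 ≤ n) (hs : s + k ≤ n) :
    (1 - (s + k) / n : ℝ) ^ k ≤ k.factorial * (n - s).choose k / n ^ k := by
  have : (0 : ℝ) < n := by exact_mod_cast hn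
  have hchoose : ((n - s - k : ℕ) : ℝ) ^ k ≤ k.factorial * (n - s).choose k := by
    have h : (n - s - k) ^ k ≤ k.factorial * (n - s).choose k := by
      rw [← Nat.descFactorial_eq_factorial_mul_choose]
      exact (Nat.pow_le_pow_left (by lia) k).trans (Nat.pow_sub_le_descFactorial (n - s) k)
    exact_mod_cast h
  have hbase : (1 - (s + k) / n : ℝ) = (n - s - k : ℕ) / n := by
    rw [Nat.sub_sub, Nat.cast_sub hs, Nat.cast_add]
    field_simp
  rw [hbase, div_pow]
  gcongr

variable {s : ℕ} {w : ℝ}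

lemma choose_mul_exp_le_of_mul_log_le (hn : 1 ≤ n) (hs : s + k ≤ n) (hs2 : s * Real.log n ≤ n)
    (hw : 0 ≤ w) (hwn : w ≤ Real.log n) :
    n.choose s * Real.exp (-(s * ((Real.log n + w) * (1 - (s + k) / n) ^ k))) ≤
      Real.exp (2 * k + 2 * k ^ 2 - w) ^ s := by
  set L := Real.log n with hL
  set y : ℝ := (s + k) / n with hy
  have hn0 : (0 : ℝ) < n := by exact_mod_cast hn
  have : 0 ≤ y := by positivity
  have hy1 : y ≤ 1 := (div_le_one hn0).mpr (by exact_mod_cast hs)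
  have hchoose : (n.choose s : ℝ) ≤ Real.exp (s * L) := by
    rw [Real.exp_nat_mul, hL, Real.exp_log hn0]
    exact_mod_cast Nat.choose_le_pow n s
  have hbernoulli : 1 - k * y ≤ (1 - y) ^ k := by
    simpa only [mul_neg, ← sub_eq_add_neg] using
      one_add_mul_le_pow (a := -y) (by linarith) k
  have hLy : L * y ≤ 1 + k := by
    have hLn : k * L ≤ k * n := by gcongr; exact Real.log_le_self hn0.le
    rw [hy, mul_div_assoc', div_le_iff₀ hn0]
    linarith
  have hwy : (L + w) * y ≤ 2 * (1 + k) :=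
    calc (L + w) * y ≤ (2 * L) * y := by gcongr; linarith
      _ ≤ 2 * (1 + k) := by linarith
  have hexp : L - (L + w) * (1 - k * y) ≤ 2 * k + 2 * k ^ 2 - w := by
    linarith [mul_le_mul_of_nonneg_left hwy (Nat.cast_nonneg k)]
  calc _ ≤ Real.exp (s * L) * Real.exp (-(s * ((L + w) * (1 - k * y)))) := by
        have : 0 ≤ L + w := by linarith
        gcongr
    _ = Real.exp (L - (L + w) * (1 - k * y)) ^ s := by
        rw [← Real.exp_add, ← Real.exp_nat_mul]
        ring_nf
    _ ≤ Real.exp (2 * k + 2 * k ^ 2 - w) ^ s := by gcongr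

lemma choose_mul_exp_le_of_le_mul_log (hs : 2 * s ≤ n) (hk : 4 * k ≤ n)
    (hs2 : n ≤ s * Real.log n) (hw : 0 ≤ w) :
    n.choose s * Real.exp (-(s * ((Real.log n + w) * (1 - (s + k) / n) ^ k))) ≤
      (Real.exp 1 * Real.log n * Real.exp (-(Real.log n / 4 ^ k))) ^ s := by
  set L := Real.log n
  set y : ℝ := (s + k) / n
  have : 0 ≤ L := Real.log_natCast_nonneg n
  have hy34 : y ≤ 3 / 4 := by
    have hs' : (2 * s : ℝ) ≤ n := by exact_mod_cast hs
    have hk' : (4 * k : ℝ) ≤ n := by exact_mod_cast hk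
    exact div_le_of_le_mul₀ (Nat.cast_nonneg n) (by norm_num) (by linarith)
  have hchoose : (n.choose s : ℝ) ≤ (Real.exp 1 * L) ^ s :=
    calc (n.choose s : ℝ) ≤ n ^ s / s.factorial := Nat.choose_le_pow_div s n
      _ ≤ (s * L) ^ s / s.factorial := by gcongr
      _ = s ^ s / s.factorial * L ^ s := by rw [mul_pow]; ring
      _ ≤ Real.exp s * L ^ s := by
          gcongr
          exact Real.pow_div_factorial_le_exp _ (Nat.cast_nonneg s) s
      _ = (Real.exp 1 * L) ^ s := by rw [mul_pow, ← Real.exp_nat_mul, mul_one]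
  have hexp : L / 4 ^ k ≤ (L + w) * (1 - y) ^ k :=
    calc L / 4 ^ k = L * (1 / 4) ^ k := by rw [one_div, inv_pow, div_eq_mul_inv]
      _ ≤ (L + w) * (1 - y) ^ k := by gcongr <;> linarith
  calc _ ≤ (Real.exp 1 * L) ^ s * Real.exp (-(s * (L / 4 ^ k))) := by gcongr
    _ = (Real.exp 1 * L * Real.exp (-(L / 4 ^ k))) ^ s := by
        rw [mul_pow _ (Real.exp _), ← Real.exp_nat_mul, mul_neg]

lemma choose_mul_exp_le_add_pow (hn : 1 ≤ n) (hk : 4 * k ≤ n) (hs : 2 * s ≤ n) (hw : 0 ≤ w)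
    (hwn : w ≤ Real.log n) :
    n.choose s * Real.exp
        (-((Real.log n + w) * k.factorial / (n : ℝ) ^ k * (s * (n - s).choose k))) ≤
      Real.exp (2 * k + 2 * k ^ 2 - w) ^ s +
        (Real.exp 1 * Real.log n * Real.exp (-(Real.log n / 4 ^ k))) ^ s := by
  have : 0 ≤ Real.log n := Real.log_natCast_nonneg n
  have hsk : s + k ≤ n := by lia
  have hexp : s * ((Real.log n + w) * (1 - (s + k) / n) ^ k) ≤
      (Real.log n + w) * k.factorial / (n : ℝ) ^ k * (s * (n - s).choose k) :=
    calc _ ≤ s * ((Real.log n + w) * (k.factorial * (n - s).choose k / n ^ k)) := by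
          gcongr
          exact one_sub_div_pow_le_factorial_mul_choose_div hn hsk
      _ = _ := by ring
  refine (show _ ≤ n.choose s *
    Real.exp (-(s * ((Real.log n + w) * (1 - (s + k) / n) ^ k))) by gcongr).trans ?_
  rcases le_total (s * Real.log n) n with hs2 | hs2
  · exact (choose_mul_exp_le_of_mul_log_le hn hsk hs2 hw hwn).trans
      (le_add_of_nonneg_right (by positivity))
  · exact (choose_mul_exp_le_of_le_mul_log hs hk hs2 hw).trans
      (le_add_of_nonneg_left (by positivity))

lemma sum_Icc_one_pow_le {x : ℝ} (hx0 : 0 ≤ x) (hx1 : x < 1) (m : ℕ) :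
    ∑ s ∈ Finset.Icc 1 m, x ^ s ≤ x / (1 - x) := by
  simpa only [Finset.Ico_add_one_right_eq_Icc, pow_one] using
    geom_sum_Ico_le_of_lt_one (m := 1) (n := m + 1) hx0 hx1

lemma measureReal_not_connected_at_log_add_le (hk : 1 ≤ k) (hkn : 4 * k ≤ n) (hw : 0 ≤ w)
    (hwn : w ≤ Real.log n) (hp : (Real.log n + w) * k.factorial / (n : ℝ) ^ k ≤ 1)
    {a b : ℝ} (ha : a = Real.exp (2 * k + 2 * k ^ 2 - w)) (ha1 : a < 1)
    (hb : b = Real.exp 1 * Real.log n * Real.exp (-(Real.log n / 4 ^ k))) (hb1 : b < 1) :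
    (birthMeasure n).real {t | ¬ (oneSkeleton (complexAt k n t
      ((Real.log n + w) * k.factorial / (n : ℝ) ^ k))).Connected} ≤
      a / (1 - a) + b / (1 - b) := by
  have : 0 ≤ Real.log n := Real.log_natCast_nonneg n
  have ha0 : 0 ≤ a := ha ▸ (Real.exp_pos _).le
  have hb0 : 0 ≤ b := hb ▸ by positivity
  calc _ ≤ _ := measureReal_not_connected_le hk (by lia) ⟨by positivity, hp⟩
    _ ≤ ∑ s ∈ Finset.Icc 1 (n / 2), (a ^ s + b ^ s) := by
        refine Finset.sum_le_sum fun s hs ↦ ?_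
        have hs2 := (Finset.mem_Icc.mp hs).2
        rw [ha, hb]
        exact choose_mul_exp_le_add_pow (by lia) hkn (by lia) hw hwn
    _ ≤ a / (1 - a) + b / (1 - b) := by
        rw [Finset.sum_add_distrib]
        exact add_le_add (sum_Icc_one_pow_le ha0 ha1 _) (sum_Icc_one_pow_le hb0 hb1 _)

end SuperThreshold

lemma tendsto_div_one_sub_of_tendsto_zero {α : Type*} {l : Filter α} {f : α → ℝ}
    (hf : Tendsto f l (nhds 0)) : Tendsto (fun a ↦ f a / (1 - f a)) l (nhds 0) := by
  simpa only [sub_zero, zero_div, Pi.div_def] using hf.div (hf.const_sub 1) (by norm_num)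

lemma tendsto_exp_one_mul_log_mul_exp_neg_log_div {c : ℝ} (hc : 0 < c) :
    Tendsto (fun n : ℕ ↦ Real.exp 1 * Real.log n * Real.exp (-(Real.log n / c)))
      atTop (nhds 0) := by
  have hlog : Tendsto (fun n : ℕ ↦ Real.log n / c) atTop atTop :=
    (Real.tendsto_log_atTop.comp tendsto_natCast_atTop_atTop).atTop_div_const hc
  have h := ((Real.tendsto_pow_mul_exp_neg_atTop_nhds_zero 1).comp hlog).const_mul
    (Real.exp 1 * c)
  rw [mul_zero] at h
  refine h.congr fun n ↦ ?_
  simp only [Function.comp_apply, pow_one]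
  field_simp

theorem tendsto_measureReal_not_connected_at_log_add {k : ℕ} (hk : 1 ≤ k) {w : ℕ → ℝ}
    (hw : Tendsto w atTop atTop) (hwn : ∀ n, w n ≤ Real.log n) :
    Tendsto (fun n : ℕ ↦ (birthMeasure n).real {t | ¬ (oneSkeleton (complexAt k n t
      ((Real.log n + w n) * k.factorial / (n : ℝ) ^ k))).Connected}) atTop (nhds 0) := by
  have ha : Tendsto (fun n ↦ Real.exp (2 * k + 2 * k ^ 2 - w n)) atTop (nhds 0) :=
    Real.tendsto_exp_atBot.comp (tendsto_const_nhds.add_atBot (tendsto_neg_atTop_atBot.comp hw))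
  have hb := tendsto_exp_one_mul_log_mul_exp_neg_log_div (by positivity : (0 : ℝ) < 4 ^ k)
  have hab := (tendsto_div_one_sub_of_tendsto_zero ha).add (tendsto_div_one_sub_of_tendsto_zero hb)
  rw [add_zero] at hab
  refine squeeze_zero' (.of_forall fun n ↦ measureReal_nonneg) ?_ hab
  filter_upwards [eventually_ge_atTop (4 * k), hw.eventually_ge_atTop 0,
    ha.eventually_lt_const one_pos, hb.eventually_lt_const one_pos,
    (tendsto_mul_log_pow_div_atTop (2 * k.factorial) 1).eventually_le_const one_pos]
    with n hn hw0 ha1 hb1 hlog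
  refine measureReal_not_connected_at_log_add_le hk hn hw0 (hwn n) ?_ rfl ha1 rfl hb1
  calc (Real.log n + w n) * k.factorial / (n : ℝ) ^ k
      ≤ (Real.log n + Real.log n) * k.factorial / (n : ℝ) ^ 1 := by
        have hn1 : (1 : ℝ) ≤ n := by exact_mod_cast (by lia : 1 ≤ n)
        have := Real.log_nonneg hn1
        gcongr
        exact hwn n
    _ = 2 * k.factorial * Real.log n ^ 1 / n := by ring
    _ ≤ 1 := hlog

/-! ### The threshold window -/

section Window

variable {k : ℕ} {w : ℕ → ℝ}

lemma eventually_log_sub_mul_factorial_div_mem_Icc (hk : 1 ≤ k) (hw : Tendsto w atTop atTop)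
    (hwn : ∀ n, w n ≤ Real.log n) :
    ∀ᶠ n : ℕ in atTop, (Real.log n - w n) * k.factorial / (n : ℝ) ^ k ∈ Set.Icc (0 : ℝ) 1 := by
  filter_upwards [eventually_ge_atTop 1, hw.eventually_ge_atTop 0,
    (tendsto_mul_log_pow_div_atTop k.factorial 1).eventually_le_const one_pos] with n hn hw0 hlog
  have hn1 : (1 : ℝ) ≤ n := by exact_mod_cast hn
  have hsub : 0 ≤ Real.log n - w n := sub_nonneg.mpr (hwn n)
  refine ⟨by positivity, ?_⟩
  calc (Real.log n - w n) * k.factorial / (n : ℝ) ^ k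
      ≤ Real.log n * k.factorial / (n : ℝ) ^ 1 := by
        have := Real.log_nonneg hn1
        gcongr
        linarith
    _ = k.factorial * Real.log n ^ 1 / n := by ring
    _ ≤ 1 := hlog

theorem tendsto_measure_pT_mem_Icc (hk : 1 ≤ k) (hw : Tendsto w atTop atTop)
    (hwn : ∀ n, w n ≤ Real.log n) :
    Tendsto (fun n : ℕ ↦ birthMeasure n {t | pT k n t ∈ Set.Icc
      ((Real.log n - w n) * k.factorial / (n : ℝ) ^ k)
      ((Real.log n + w n) * k.factorial / (n : ℝ) ^ k)}) atTop (nhds 1) := by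
  refine tendsto_measure_one_of_compl_subset (t := fun n ↦
    {t | (oneSkeleton (complexAt k n t
      ((Real.log n - w n) * k.factorial / (n : ℝ) ^ k))).Connected} ∪
    {t | ¬ (oneSkeleton (complexAt k n t
      ((Real.log n + w n) * k.factorial / (n : ℝ) ^ k))).Connected}) ?_ ?_
  · filter_upwards [eventually_log_sub_mul_factorial_div_mem_Icc hk hw hwn,
      hw.eventually_ge_atTop 0] with n hp hw0 t ht
    contrapose! ht
    simp only [Set.mem_union, Set.mem_ofPred_eq, not_or, not_not] at ht
    have : 0 ≤ Real.log n + w n := add_nonneg (Real.log_natCast_nonneg n) hw0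
    exact Set.notMem_compl_iff.mpr
      ⟨le_pT_of_not_connected hp ht.1, pT_le_of_connected (by positivity) ht.2⟩
  · refine squeeze_zero (fun n ↦ measureReal_nonneg) (fun n ↦ measureReal_union_le _ _) ?_
    simpa only [add_zero] using (tendsto_measureReal_connected_at_log_sub hk hw hwn).add
      (tendsto_measureReal_not_connected_at_log_add hk hw hwn)

end Window

theorem statement6_general (k : ℕ) (hk : 1 ≤ k) (ω : ℕ → ℝ) (hω : Tendsto ω atTop atTop)
    (c : ℝ) (hc : c < k.factorial) :
    Tendsto (fun n : ℕ ↦ birthMeasure n {t : Finset (Fin n) → ℝ |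
      ((Real.log n - ω n) * (Nat.factorial k) / (n : ℝ) ^ k < pT k n t ∧
        pT k n t < (Real.log n + ω n) * (Nat.factorial k) / (n : ℝ) ^ k) ∧
      c * Real.log n / (n : ℝ) ^ k < pT k n t})
      atTop (nhds 1) := by
  have hfact : (0 : ℝ) < k.factorial := by exact_mod_cast k.factorial_pos
  set ε : ℝ := min 1 (1 - c / k.factorial)
  have hε : 0 < ε := lt_min one_pos (sub_pos.mpr ((div_lt_one hfact).mpr hc))
  have hlog : Tendsto (fun n : ℕ ↦ Real.log n) atTop atTop :=
    Real.tendsto_log_atTop.comp tendsto_natCast_atTop_atTop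
  -- The slack from `w / 2` to `w` turns the closed window into the strict inequalities.
  set w : ℕ → ℝ := fun n ↦ min (ω n) (ε * Real.log n)
  have hw : Tendsto w atTop atTop := tendsto_inf_atTop _ hω (hlog.const_mul_atTop hε)
  have hwε : ∀ n, w n ≤ ε * Real.log n := fun n ↦ min_le_right _ _
  have hwn : ∀ n, w n / 2 ≤ Real.log n := fun n ↦ by
    have hL := Real.log_natCast_nonneg n
    linarith [hwε n, mul_le_of_le_one_left hL (min_le_left _ _ : ε ≤ 1)]
  refine tendsto_of_tendsto_of_tendsto_of_le_of_le'
    (tendsto_measure_pT_mem_Icc hk (hw.atTop_div_const two_pos) hwn) tendsto_const_nhds ?_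
    (.of_forall fun n ↦ prob_le_one)
  filter_upwards [eventually_ge_atTop 1, hw.eventually_gt_atTop 0] with n hn hw0
  refine measure_mono fun t ht ↦ ?_
  have : (0 : ℝ) < n := by exact_mod_cast hn
  have hwω : w n ≤ ω n := min_le_left _ _
  have hcw : c * Real.log n < (Real.log n - w n / 2) * k.factorial := by
    have hεc : ε * k.factorial ≤ k.factorial - c := by
      rw [← le_div_iff₀ hfact, sub_div, div_self hfact.ne']
      exact min_le_right _ _
    have hw_le : w n * k.factorial ≤ (k.factorial - c) * Real.log n :=
      calc w n * k.factorial ≤ ε * Real.log n * k.factorial := by gcongr; exact hwε n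
        _ = ε * k.factorial * Real.log n := mul_right_comm _ _ _
        _ ≤ (k.factorial - c) * Real.log n := by gcongr
    linarith [mul_pos hw0 hfact]
  refine ⟨⟨lt_of_lt_of_le ?_ ht.1, ht.2.trans_lt ?_⟩, lt_of_lt_of_le ?_ ht.1⟩
  · gcongr; linarith
  · gcongr; linarith
  · gcongr

/-- Lemma 4.1: whp `(log n - ω)·k!/n^k < p_T < (log n + ω)·k!/n^k`, and in particular
whp `p_T > log n / n^k`. -/
theorem statement6 (k : ℕ) (hk : 2 ≤ k) (ω : ℕ → ℝ) (hω : Tendsto ω atTop atTop) :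
    Tendsto (fun n : ℕ => birthMeasure n {t : Finset (Fin n) → ℝ |
      ((Real.log n - ω n) * (Nat.factorial k) / (n : ℝ) ^ k < pT k n t ∧
        pT k n t < (Real.log n + ω n) * (Nat.factorial k) / (n : ℝ) ^ k) ∧
      Real.log n / (n : ℝ) ^ k < pT k n t})
      atTop (nhds 1) := by
  simpa only [one_mul] using statement6_general k (by lia) ω hω 1
    (by exact_mod_cast Nat.one_lt_factorial.mpr hk)

end RSC
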